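/- arXiv:0910.5712 — 2 statements merged into one kernel-verified Lean document; each statement's English description precedes it below -/
import Mathlib

section
/- Let ε > 0 and let f : ℝ → ℝ be twice continuously differentiable on the interval (−ε, ε), even on this interval (f(t) = f(−t) for all |t| < ε), not constant on (−ε, ε), and satisfy f(0) = 0. Then there is no constant γ ≥ 0 such that γ²·f(t)² − f′(t)² ≥ 0 for all t ∈ (−ε, ε). -/
/-! The inequality `γ² f² - f'² ≥ 0` says `|f'| ≤ γ |f|`. Together with `f 0 = 0`, Grönwall's
inequality forces `f = 0` on `[0, ε)`; by evenness `f = 0` on all of `(-ε, ε)`, contradicting that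
`f` is not constant there. -/

/-- **Lemma 5.2 of the paper.** If `f` is a twice continuously differentiable even
function on `(-ε, ε)` with `f 0 = 0` which is not constant on `(-ε, ε)`, then there
is no constant `γ ≥ 0` with `γ² f(t)² - f'(t)² ≥ 0` on `(-ε, ε)`. -/
theorem no_gronwall_constant (ε : ℝ) (hε : 0 < ε) (f : ℝ → ℝ)
    (hf : ContDiffOn ℝ 2 f (Set.Ioo (-ε) ε))
    (heven : ∀ t : ℝ, |t| < ε → f t = f (-t))
    (hnonconst : ¬ ∃ k : ℝ, ∀ t ∈ Set.Ioo (-ε) ε, f t = k)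
    (hf0 : f 0 = 0) :
    ¬ ∃ γ : ℝ, 0 ≤ γ ∧ ∀ t ∈ Set.Ioo (-ε) ε,
      γ ^ 2 * (f t) ^ 2 - (deriv f t) ^ 2 ≥ 0 := by
  rintro ⟨γ, hγ, h⟩
  have hpos : ∀ t, 0 ≤ t → t < ε → f t = 0 := by
    intro t ht0 htε
    refine eq_zero_of_abs_deriv_le_mul_abs_self_of_eq_zero_right (f' := deriv f) (K := γ)
      (a := 0) (b := t) (hf.continuousOn.mono ?_) ?_ hf0 ?_ t ⟨ht0, le_rfl⟩
    · intro x hx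
      exact ⟨by linarith [hx.1], by linarith [hx.2]⟩
    · intro x hx
      have hx' : x ∈ Set.Ioo (-ε) ε := ⟨by linarith [hx.1], by linarith [hx.2]⟩
      exact ((hf.differentiableOn (by norm_num)).differentiableAt
        (Ioo_mem_nhds hx'.1 hx'.2)).hasDerivAt.hasDerivWithinAt
    · intro x hx
      have hx' := h x ⟨by linarith [hx.1], by linarith [hx.2]⟩
      refine abs_le_of_sq_le_sq (b := γ * ‖f x‖) ?_ (by positivity)
      rw [mul_pow, Real.norm_eq_abs, sq_abs]
      linarith
  refine hnonconst ⟨0, fun t ht => ?_⟩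
  rcases le_total 0 t with h0 | h0
  · exact hpos t h0 ht.2
  · rw [heven t (abs_lt.mpr ht)]
    exact hpos (-t) (by linarith) (by linarith [ht.1])
end

section
/- Let ε > 0, let f : ℝ → ℝ be twice continuously differentiable on (−ε, ε), even on this interval, not constant on (−ε, ε), with f(0) = 0. Let B : (−ε, ε) → ℝ satisfy 0 ≤ B(t) ≤ M for some constant M and all t ∈ (−ε, ε), and let c > 0 be a constant. Then it is NOT the case that B(t)·f(t)² − c·f′(t)² ≥ 0 for all t ∈ (−ε, ε). -/
/-!
The inequality together with `B ≤ M` gives `|f'| ≤ √(M / c) · |f|` on `(-ε, ε)`. Since `f 0 = 0`,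
Grönwall's inequality forces `f = 0` on `[0, ε)`, and evenness extends this to `(-ε, ε)`, so `f`
would be constant.
-/

/-- The analytic endgame of the proof of Theorem 3.1: if `f` is a twice continuously
differentiable even function on `(-ε, ε)` with `f 0 = 0` which is not constant on
`(-ε, ε)`, `B` satisfies `0 ≤ B t ≤ M` on `(-ε, ε)` and `c > 0`, then the inequality
`B(t)·f(t)² - c·f'(t)² ≥ 0` cannot hold throughout `(-ε, ε)`. -/
theorem no_bounded_gronwall (ε : ℝ) (hε : 0 < ε) (f : ℝ → ℝ)
    (hf : ContDiffOn ℝ 2 f (Set.Ioo (-ε) ε))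
    (heven : ∀ t : ℝ, |t| < ε → f t = f (-t))
    (hnonconst : ¬ ∃ k : ℝ, ∀ t ∈ Set.Ioo (-ε) ε, f t = k)
    (hf0 : f 0 = 0)
    (B : ℝ → ℝ) (M : ℝ) (hB : ∀ t ∈ Set.Ioo (-ε) ε, 0 ≤ B t ∧ B t ≤ M)
    (c : ℝ) (hc : 0 < c) :
    ¬ ∀ t ∈ Set.Ioo (-ε) ε, B t * (f t) ^ 2 - c * (deriv f t) ^ 2 ≥ 0 := by
  intro h
  have hdiff : ∀ t ∈ Set.Ioo (-ε) ε, DifferentiableAt ℝ f t := fun t ht =>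
    (hf.differentiableOn (by norm_num)).differentiableAt (isOpen_Ioo.mem_nhds ht)
  have hbound : ∀ t ∈ Set.Ioo (-ε) ε, ‖deriv f t‖ ≤ √(M / c) * ‖f t‖ := by
    intro t ht
    have hM : 0 ≤ M := (hB t ht).1.trans (hB t ht).2
    have hMf : B t * f t ^ 2 ≤ M * f t ^ 2 :=
      mul_le_mul_of_nonneg_right (hB t ht).2 (sq_nonneg _)
    rw [Real.norm_eq_abs, Real.norm_eq_abs]
    refine abs_le_of_sq_le_sq ?_ (by positivity)
    rw [mul_pow, Real.sq_sqrt (by positivity), sq_abs, div_mul_eq_mul_div, le_div_iff₀ hc]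
    linarith [h t ht]
  have hzero : ∀ t, 0 ≤ t → t < ε → f t = 0 := by
    intro t ht0 htε
    have hsub : Set.Icc 0 t ⊆ Set.Ioo (-ε) ε := fun x hx =>
      ⟨by linarith [hx.1], by linarith [hx.2]⟩
    exact eq_zero_of_abs_deriv_le_mul_abs_self_of_eq_zero_right
      (fun x hx => (hdiff x (hsub hx)).continuousAt.continuousWithinAt)
      (fun x hx => (hdiff x (hsub (Set.Ico_subset_Icc_self hx))).hasDerivAt.hasDerivWithinAt)
      hf0 (fun x hx => hbound x (hsub (Set.Ico_subset_Icc_self hx))) t ⟨ht0, le_rfl⟩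
  refine hnonconst ⟨0, fun t ht => ?_⟩
  rcases le_total 0 t with h0 | h0
  · exact hzero t h0 ht.2
  · rw [heven t (abs_lt.mpr ht)]
    exact hzero (-t) (by linarith) (by linarith [ht.1])
end
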